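/- Let H₁ and H₂ be separable infinite-dimensional complex Hilbert spaces, and let A and B be σ-unital closed *-subalgebras of B(H₁) and B(H₂) respectively with K(H₁) ⊆ A and K(H₂) ⊆ B. Define LM(X) = {T ∈ B(H₂,H₁) : T∘b is compact for all b ∈ B}, RM(X) = {T ∈ B(H₂,H₁) : a∘T is compact for all a ∈ A}, M(X) = LM(X) ∩ RM(X), and QM(X) = {T ∈ B(H₂,H₁) : a∘T∘b is compact for all a ∈ A, b ∈ B}. Then QM(X) = M(X) if and only if either (the identity operator on H₁ belongs to A and the identity operator on H₂ belongs to B) or (A = K(H₁) and B = K(H₂)). -/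

import Mathlib

/-!
The whole argument rests on one construction. If `A` contains the compact operators, is σ-unital
with strictly positive element `e`, and does not contain the identity, then `e` is injective with
dense range but not invertible. Hence `e` is not bounded below on any subspace of finite
codimension, and one can choose an orthonormal sequence `η₀, η₁, …` with `‖e ηₙ‖` summable.
An isometry `V` of a separable Hilbert space sending an orthonormal basis into this sequence then
satisfies: `e V` is a norm-convergent sum of rank-one operators, so `a V` and `V* a` are compact for
every `a ∈ A` (`exists_isometry_compact`).

Suppose now that `QM(X) = M(X)`. If `1 ∉ A`, the isometry `V : H₂ → H₁` for `A` lies in `RM(X)`,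
hence in `QM(X) = M(X)`, so `V b` is compact for all `b ∈ B`, and `b = V* V b` is compact: thus
`B = K(H₂)`. If `1 ∉ B`, the same argument with the adjoint of an isometry `H₁ → H₂` gives
`A = K(H₁)`. Since the identity of an infinite-dimensional space is not compact, `1 ∉ A` and
`1 ∉ B` imply each other, which leaves exactly the two alternatives. The converse is immediate.
-/

/-- A closed *-subalgebra of `B(H)`, given as a set: a norm-closed linear subspace closed
under composition and Hilbert-space adjoints. -/
structure IsClosedStarSubalgebraOfOperators {H : Type*} [NormedAddCommGroup H]
    [InnerProductSpace ℂ H] [CompleteSpace H] (A : Set (H →L[ℂ] H)) : Prop where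
  isClosed : IsClosed A
  zero_mem : (0 : H →L[ℂ] H) ∈ A
  add_mem : ∀ x y : H →L[ℂ] H, x ∈ A → y ∈ A → x + y ∈ A
  smul_mem : ∀ (c : ℂ) (x : H →L[ℂ] H), x ∈ A → c • x ∈ A
  mul_mem : ∀ x y : H →L[ℂ] H, x ∈ A → y ∈ A → x.comp y ∈ A
  star_mem : ∀ x : H →L[ℂ] H, x ∈ A → ContinuousLinearMap.adjoint x ∈ A

/-- The operator algebra `A` is σ-unital: it contains a positive element `e` such that
`{e ∘ a : a ∈ A}` is dense in `A`. -/
def IsSigmaUnitalOperatorAlgebra {H : Type*} [NormedAddCommGroup H]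
    [InnerProductSpace ℂ H] [CompleteSpace H] (A : Set (H →L[ℂ] H)) : Prop :=
  ∃ e ∈ A, e.IsPositive ∧ A ⊆ closure {x : H →L[ℂ] H | ∃ a ∈ A, x = e.comp a}

open ContinuousLinearMap InnerProductSpace

theorem isCompactOperator_rankOne {E F : Type*} [NormedAddCommGroup E] [InnerProductSpace ℂ E]
    [NormedAddCommGroup F] [InnerProductSpace ℂ F] (x : E) (y : F) :
    IsCompactOperator (rankOne ℂ x y) := by
  have h : IsCompactOperator (ContinuousLinearMap.id ℂ ℂ) :=
    ⟨Metric.closedBall 0 1, isCompact_closedBall 0 1, by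
      simpa using Metric.closedBall_mem_nhds (0 : ℂ) one_pos⟩
  exact (h.clm_comp (toSpanSingleton ℂ x)).comp_clm (innerSL ℂ y)

theorem isClosed_compactOperators (E F : Type*) [NormedAddCommGroup E] [InnerProductSpace ℂ E]
    [NormedAddCommGroup F] [InnerProductSpace ℂ F] [CompleteSpace F] :
    IsClosed {T : E →L[ℂ] F | IsCompactOperator T} :=
  isClosed_setOfPred_isCompactOperator

theorem isCompactOperator_of_hasSum {E F ι : Type*} [NormedAddCommGroup E] [InnerProductSpace ℂ E]
    [NormedAddCommGroup F] [InnerProductSpace ℂ F] [CompleteSpace F] {f : ι → E →L[ℂ] F}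
    {T : E →L[ℂ] F} (hf : ∀ i, IsCompactOperator (f i)) (hT : HasSum f T) :
    IsCompactOperator T := by
  refine (isClosed_compactOperators E F).mem_of_tendsto hT (Filter.Eventually.of_forall fun s => ?_)
  exact (compactOperator (RingHom.id ℂ) E F).sum_mem (f := f) fun i _ => hf i

theorem Orthonormal.countable_of_separable {E ι : Type*} [NormedAddCommGroup E]
    [InnerProductSpace ℂ E] [TopologicalSpace.SeparableSpace E] {v : ι → E}
    (hv : Orthonormal ℂ v) : Countable ι := by
  rw [← Set.countable_univ_iff]
  -- distinct vectors of an orthonormal family are at distance `√2 ≥ 1`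
  refine Set.PairwiseDisjoint.countable_of_isOpen (s := fun i => Metric.ball (v i) (1 / 2))
    ?_ (fun i _ => Metric.isOpen_ball) (fun i _ => ⟨v i, Metric.mem_ball_self (by norm_num)⟩)
  intro i _ j _ hij
  refine Metric.ball_disjoint_ball ?_
  have h0 : inner ℂ (v i) (v j) = 0 := hv.2 hij
  have h := norm_sub_sq (𝕜 := ℂ) (v i) (v j)
  rw [h0, hv.1 i, hv.1 j] at h
  rw [dist_eq_norm]
  simp at h
  nlinarith [norm_nonneg (v i - v j)]

section Operator

variable {H : Type*} [NormedAddCommGroup H] [InnerProductSpace ℂ H]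

/-- A strictly positive element has dense range, because every rank-one operator is a limit of
operators of the form `e a`. -/
theorem denseRange_of_sigmaUnital {A : Set (H →L[ℂ] H)}
    (hK : ∀ T : H →L[ℂ] H, IsCompactOperator T → T ∈ A) {e : H →L[ℂ] H}
    (hd : A ⊆ closure {x : H →L[ℂ] H | ∃ a ∈ A, x = e.comp a}) : DenseRange e := by
  intro x
  rcases eq_or_ne x 0 with rfl | hx
  · exact subset_closure ⟨0, map_zero e⟩
  have h := hd (hK _ (isCompactOperator_rankOne x x))
  -- evaluation at `u` is continuous, and `rankOne x x u = x`
  set u : H := ((‖x‖ : ℂ) ^ 2)⁻¹ • x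
  have hcont : Continuous fun T : H →L[ℂ] H => T u := (ContinuousLinearMap.apply ℂ H u).continuous
  have h2 := map_mem_closure hcont h (t := Set.range e) (by
    rintro _ ⟨a, -, rfl⟩
    exact ⟨a u, rfl⟩)
  have hx' : (‖x‖ : ℂ) ≠ 0 := by simpa using hx
  have h3 : rankOne ℂ x x u = x := by
    simp [u, rankOne_apply, inner_self_eq_norm_sq_to_K, hx']
  simpa only [h3] using h2

theorem injective_of_isPositive_of_denseRange {e : H →L[ℂ] H} (he : e.IsPositive)
    (hd : DenseRange e) : Function.Injective e := by
  refine (injective_iff_map_eq_zero e).2 fun x hx => ?_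
  have h : ∀ z, inner ℂ x z = 0 := by
    refine fun z => hd.induction_on z
      (isClosed_eq (by fun_prop) continuous_const) fun y => ?_
    have := he.isSymmetric x y
    simpa [hx] using this.symm
  exact inner_self_eq_zero.1 (h x)

theorem not_isCompactOperator_id (hH : ¬ FiniteDimensional ℂ H) :
    ¬ IsCompactOperator (ContinuousLinearMap.id ℂ H) :=
  fun h => hH (FiniteDimensional.of_isCompactOperator_id (𝕜 := ℂ) h)

variable [CompleteSpace H]

/-- If the strictly positive element is invertible, then `e A` is closed, so `e ∈ e A` and cancelling
`e` shows that the identity lies in `A`. -/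
theorem id_mem_of_surjective {A : Set (H →L[ℂ] H)} (hA : IsClosed A) {e : H →L[ℂ] H} (heA : e ∈ A)
    (hd : A ⊆ closure {x : H →L[ℂ] H | ∃ a ∈ A, x = e.comp a})
    (hinj : Function.Injective e) (hsurj : Function.Surjective e) :
    ContinuousLinearMap.id ℂ H ∈ A := by
  let E := ContinuousLinearEquiv.ofBijective e (LinearMap.ker_eq_bot.2 hinj)
    (LinearMap.range_eq_top.2 hsurj)
  have hE : ∀ x, E.symm (e x) = x := fun x => E.symm_apply_apply x
  have hcont : Continuous fun T : H →L[ℂ] H => (E.symm : H →L[ℂ] H).comp T := by fun_prop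
  have h := map_mem_closure hcont (hd heA) (t := A) (by
    rintro _ ⟨a, ha, rfl⟩
    have : (E.symm : H →L[ℂ] H).comp (e.comp a) = a := by ext x; simp [hE]
    simpa only [this] using ha)
  rw [hA.closure_eq] at h
  have : (E.symm : H →L[ℂ] H).comp e = ContinuousLinearMap.id ℂ H := by ext x; simp [hE]
  rwa [this] at h

/-- Otherwise `e` would be bounded below on `Fᗮ`, so its range, the sum of the closed subspace
`e (Fᗮ)` and the finite-dimensional `e F`, would be closed as well as dense. -/
theorem exists_unit_small {e : H →L[ℂ] H} (hd : DenseRange e) (hns : ¬ Function.Surjective e)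
    (F : Submodule ℂ H) [FiniteDimensional ℂ F] {ε : ℝ} (hε : 0 < ε) :
    ∃ y ∈ Fᗮ, ‖y‖ = 1 ∧ ‖e y‖ ≤ ε := by
  by_contra! hcon
  apply hns
  let g : Fᗮ →L[ℂ] H := e.comp Fᗮ.subtypeL
  have hanti : AntilipschitzWith (Real.toNNReal ε⁻¹) g := by
    refine AddMonoidHomClass.antilipschitz_of_bound g fun x => ?_
    rw [Real.coe_toNNReal _ (inv_nonneg.2 hε.le)]
    rcases eq_or_ne x 0 with rfl | hx
    · simp
    have hx' : ‖(x : H)‖ ≠ 0 := by simpa using hx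
    have h1 := hcon (((‖(x : H)‖ : ℂ)⁻¹) • (x : H)) (Fᗮ.smul_mem _ x.2)
      (by simp [norm_smul, hx'])
    have h2 : ε < ‖(x : H)‖⁻¹ * ‖g x‖ := by simpa [norm_smul, g] using h1
    have hpos : 0 < ‖(x : H)‖ := lt_of_le_of_ne (norm_nonneg _) hx'.symm
    rw [inv_mul_eq_div, lt_div_iff₀ hpos] at h2
    rw [inv_mul_eq_div, le_div_iff₀ hε, mul_comm]
    exact h2.le
  have hclosed : IsClosed (g.range : Set H) := by
    rw [LinearMap.coe_range]
    exact hanti.isClosed_range g.uniformContinuous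
  have hsup : IsClosed ((g.range ⊔ F.map (e : H →ₗ[ℂ] H) : Submodule ℂ H) : Set H) :=
    Submodule.isClosed_sup_finiteDimensional _ _ hclosed
  have hle : ∀ x, e x ∈ g.range ⊔ F.map (e : H →ₗ[ℂ] H) := by
    intro x
    obtain ⟨y, hy, z, hz, rfl⟩ := F.exists_add_mem_mem_orthogonal x
    rw [map_add]
    exact add_mem (Submodule.mem_sup_right ⟨y, hy, rfl⟩) (Submodule.mem_sup_left ⟨⟨z, hz⟩, rfl⟩)
  intro y
  have hy : y ∈ g.range ⊔ F.map (e : H →ₗ[ℂ] H) :=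
    hd.induction_on y hsup hle
  obtain ⟨_, ⟨z, rfl⟩, _, ⟨w, -, rfl⟩, rfl⟩ := Submodule.mem_sup.1 hy
  exact ⟨z + w, map_add e _ _⟩

theorem exists_orthonormal_summable {e : H →L[ℂ] H} (hd : DenseRange e)
    (hinj : Function.Injective e) (hns : ¬ Function.Surjective e) :
    ∃ η : ℕ → H, Orthonormal ℂ η ∧ Summable fun n => ‖e (η n)‖ := by
  obtain ⟨η, h1, h2⟩ := exists_seq_of_forall_finset_exists (fun x : H => ‖x‖ = 1)
    (fun x y => inner ℂ x y = 0 ∧ ‖e y‖ ≤ 1 / 2 * ‖e x‖) (by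
      intro s hs
      -- injectivity of `e` makes all the prescribed bounds positive
      obtain ⟨ε, hε, hle⟩ : ∃ ε : ℝ, 0 < ε ∧ ∀ x ∈ s, ε ≤ 1 / 2 * ‖e x‖ := by
        rcases s.eq_empty_or_nonempty with rfl | hne
        · exact ⟨1, one_pos, by simp⟩
        obtain ⟨m, hm, hmin⟩ := s.exists_min_image (fun x => ‖e x‖) hne
        have hm0 : m ≠ 0 := by
          rintro rfl
          simpa using hs 0 hm
        have : 0 < ‖e m‖ := norm_pos_iff.2 ((map_ne_zero_iff e hinj).2 hm0)
        exact ⟨1 / 2 * ‖e m‖, by positivity, fun x hx => by have := hmin x hx; gcongr⟩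
      obtain ⟨y, hy, hy1, hye⟩ := exists_unit_small hd hns (Submodule.span ℂ (s : Set H)) hε
      exact ⟨y, hy1, fun x hx => ⟨(Submodule.mem_orthogonal _ _).1 hy x
        (Submodule.subset_span hx), hye.trans (hle x hx)⟩⟩)
  refine ⟨η, ⟨h1, fun i j hij => ?_⟩, ?_⟩
  · rcases lt_or_gt_of_ne hij with h | h
    · exact (h2 i j h).1
    · exact inner_eq_zero_symm.1 (h2 j i h).1
  · have hb : ∀ n, ‖e (η n)‖ ≤ ‖e (η 0)‖ * (1 / 2) ^ n := by
      intro n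
      induction n with
      | zero => simp
      | succ k ih =>
        have := (h2 k (k + 1) k.lt_succ_self).2
        rw [pow_succ]
        linarith
    exact Summable.of_nonneg_of_le (fun _ => norm_nonneg _) hb
      (summable_geometric_two.mul_left _)

/-- The isometry sends an orthonormal basis of `G` into an orthonormal sequence `η` for which
`∑ ‖e ηₙ‖` converges, `e` being a strictly positive element of `A`. -/
theorem exists_isometry_compact {G : Type*} [NormedAddCommGroup G] [InnerProductSpace ℂ G]
    [CompleteSpace G] [TopologicalSpace.SeparableSpace G] {A : Set (H →L[ℂ] H)}
    (hA : IsClosedStarSubalgebraOfOperators A)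
    (hK : ∀ T : H →L[ℂ] H, IsCompactOperator T → T ∈ A)
    (hσ : IsSigmaUnitalOperatorAlgebra A) (h1 : ContinuousLinearMap.id ℂ H ∉ A) :
    ∃ V : G →L[ℂ] H, (adjoint V).comp V = ContinuousLinearMap.id ℂ G ∧
      (∀ a ∈ A, IsCompactOperator (a.comp V)) ∧
      (∀ a ∈ A, IsCompactOperator ((adjoint V).comp a)) := by
  obtain ⟨e, heA, hpos, hd⟩ := hσ
  have hdense := denseRange_of_sigmaUnital hK hd
  have hinj := injective_of_isPositive_of_denseRange hpos hdense
  have hns : ¬ Function.Surjective e := fun h =>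
    h1 (id_mem_of_surjective hA.isClosed heA hd hinj h)
  obtain ⟨η, hη, hsum⟩ := exists_orthonormal_summable hdense hinj hns
  obtain ⟨w, b, -⟩ := exists_hilbertBasis ℂ G
  have : Countable w := b.orthonormal.countable_of_separable
  obtain ⟨f, hf⟩ := exists_injective_nat w
  have hηf : Orthonormal ℂ (η ∘ f) := hη.comp f hf
  let L : G →ₗᵢ[ℂ] H := hηf.orthogonalFamily.linearIsometry.comp b.repr.toLinearIsometry
  let V : G →L[ℂ] H := L.toContinuousLinearMap
  have hV : ∀ x, HasSum (fun i => inner ℂ (b i) x • η (f i)) (V x) := by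
    intro x
    have := hηf.orthogonalFamily.hasSum_linearIsometry (b.repr x)
    simpa [V, L, b.repr_apply_apply] using this
  have hVV : (adjoint V).comp V = ContinuousLinearMap.id ℂ G := by
    ext x
    refine ext_inner_right ℂ fun y => ?_
    simp [V]
  have hS : Summable fun i => rankOne ℂ (e (η (f i))) (b i) := by
    refine Summable.of_norm ?_
    simpa [b.orthonormal.1, Function.comp_def] using hsum.comp_injective hf
  have heV : HasSum (fun i => rankOne ℂ (e (η (f i))) (b i)) (e.comp V) := by
    have hS' := hS.hasSum
    convert hS'
    ext x
    have h2 := hS'.mapL (ContinuousLinearMap.apply ℂ H x)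
    have h3 := (hV x).mapL e
    exact h3.unique (by simpa [rankOne_apply] using h2)
  have hVe : HasSum (fun i => rankOne ℂ (b i) (e (η (f i)))) ((adjoint V).comp e) := by
    have := heV.map (adjoint : (G →L[ℂ] H) ≃ₗᵢ⋆[ℂ] (H →L[ℂ] G))
      (adjoint : (G →L[ℂ] H) ≃ₗᵢ⋆[ℂ] (H →L[ℂ] G)).continuous
    simpa [Function.comp_def, adjoint_comp, hpos.isSelfAdjoint.adjoint_eq] using this
  have ceV := isCompactOperator_of_hasSum (fun i => isCompactOperator_rankOne _ _) heV
  have cVe := isCompactOperator_of_hasSum (fun i => isCompactOperator_rankOne _ _) hVe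
  refine ⟨V, hVV, fun a ha => ?_, fun a ha => ?_⟩
  · -- `a*` is a limit of operators `e c`, so `a V` is a limit of operators `c* e V`
    have hcont : Continuous fun T : H →L[ℂ] H => (adjoint T).comp V := by fun_prop
    have h := map_mem_closure hcont (hd (hA.star_mem a ha))
      (t := {T : G →L[ℂ] H | IsCompactOperator T}) (by
        rintro _ ⟨c, -, rfl⟩
        have hc : (adjoint (e.comp c)).comp V = (adjoint c).comp (e.comp V) := by
          rw [adjoint_comp, hpos.isSelfAdjoint.adjoint_eq, comp_assoc]
        simp only [hc]
        exact ceV.clm_comp (adjoint c))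
    rw [(isClosed_compactOperators G H).closure_eq] at h
    simpa using h
  · have hcont : Continuous fun T : H →L[ℂ] H => (adjoint V).comp T := by fun_prop
    have h := map_mem_closure hcont (hd ha) (t := {T : H →L[ℂ] G | IsCompactOperator T}) (by
        rintro _ ⟨c, -, rfl⟩
        exact cVe.comp_clm c)
    rwa [(isClosed_compactOperators H G).closure_eq] at h

end Operator

/-- With `QM(X) = {T : a ∘ T ∘ b compact ∀ a ∈ A, b ∈ B}` and
`M(X) = LM(X) ∩ RM(X)`, one has `QM(X) = M(X)` iff (`1 ∈ A` and `1 ∈ B`) or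
(`A = K(H₁)` and `B = K(H₂)`). -/
theorem QM_eq_M_iff
    {H₁ H₂ : Type*} [NormedAddCommGroup H₁] [InnerProductSpace ℂ H₁] [CompleteSpace H₁]
    [NormedAddCommGroup H₂] [InnerProductSpace ℂ H₂] [CompleteSpace H₂]
    [TopologicalSpace.SeparableSpace H₁] [TopologicalSpace.SeparableSpace H₂]
    (hH₁ : ¬ FiniteDimensional ℂ H₁) (hH₂ : ¬ FiniteDimensional ℂ H₂)
    {A : Set (H₁ →L[ℂ] H₁)} {B : Set (H₂ →L[ℂ] H₂)}
    (hA : IsClosedStarSubalgebraOfOperators A) (hB : IsClosedStarSubalgebraOfOperators B)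
    (hKA : ∀ T : H₁ →L[ℂ] H₁, IsCompactOperator T → T ∈ A)
    (hKB : ∀ T : H₂ →L[ℂ] H₂, IsCompactOperator T → T ∈ B)
    (hAσ : IsSigmaUnitalOperatorAlgebra A) (hBσ : IsSigmaUnitalOperatorAlgebra B) :
    {T : H₂ →L[ℂ] H₁ | ∀ a ∈ A, ∀ b ∈ B, IsCompactOperator (a.comp (T.comp b))} =
        {T : H₂ →L[ℂ] H₁ | ∀ b ∈ B, IsCompactOperator (T.comp b)} ∩
          {T : H₂ →L[ℂ] H₁ | ∀ a ∈ A, IsCompactOperator (a.comp T)} ↔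
      ((ContinuousLinearMap.id ℂ H₁ ∈ A ∧ ContinuousLinearMap.id ℂ H₂ ∈ B) ∨
        (A = {T : H₁ →L[ℂ] H₁ | IsCompactOperator T} ∧
          B = {T : H₂ →L[ℂ] H₂ | IsCompactOperator T})) := by
  constructor
  · intro h
    have hBK : ContinuousLinearMap.id ℂ H₁ ∉ A → ∀ b ∈ B, IsCompactOperator b := by
      intro h1 b hb
      obtain ⟨V, hVV, hV, -⟩ := exists_isometry_compact (G := H₂) hA hKA hAσ h1
      have hVM := h.subset (show V ∈ _ from fun a ha b _ => (hV a ha).comp_clm b)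
      have h2 : IsCompactOperator ((adjoint V).comp (V.comp b)) :=
        (hVM.1 b hb).clm_comp (adjoint V)
      rwa [← comp_assoc, hVV, id_comp] at h2
    have hAK : ContinuousLinearMap.id ℂ H₂ ∉ B → ∀ a ∈ A, IsCompactOperator a := by
      intro h1 a ha
      obtain ⟨V, hVV, -, hV⟩ := exists_isometry_compact (G := H₁) hB hKB hBσ h1
      have hVM := h.subset (show adjoint V ∈ _ from fun a _ b hb => (hV b hb).clm_comp a)
      have h2 : IsCompactOperator ((a.comp (adjoint V)).comp V) :=
        (hVM.2 a ha).comp_clm V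
      rwa [comp_assoc, hVV, comp_id] at h2
    by_cases hA1 : ContinuousLinearMap.id ℂ H₁ ∈ A
    · refine Or.inl ⟨hA1, ?_⟩
      by_contra hB1
      exact not_isCompactOperator_id hH₁ (hAK hB1 _ hA1)
    · have hB1 : ContinuousLinearMap.id ℂ H₂ ∉ B := fun hB1 =>
        not_isCompactOperator_id hH₂ (hBK hA1 _ hB1)
      exact Or.inr ⟨Set.Subset.antisymm (hAK hB1) hKA, Set.Subset.antisymm (hBK hA1) hKB⟩
  · intro h
    refine Set.Subset.antisymm (fun T hT => ?_) fun T hT a _ b hb => (hT.1 b hb).clm_comp a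
    rcases h with ⟨hA1, hB1⟩ | ⟨rfl, rfl⟩
    · have hTc : IsCompactOperator T := hT _ hA1 _ hB1
      exact ⟨fun b _ => hTc.comp_clm b, fun a _ => hTc.clm_comp a⟩
    · exact ⟨fun b hb => IsCompactOperator.clm_comp hb T, fun a ha => IsCompactOperator.comp_clm ha T⟩
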